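/- arXiv:1612.02638 — 5 statements merged into one kernel-verified Lean document; each statement's English description precedes it below -/
import Mathlib

section
/- Let m = 2l+1 be odd and let A be an order-m, dimension-(n+1) real symmetric tensor that is regularly decomposable, i.e. its 0-th row tensor satisfies A₀ = Σ_{k=1}^r (u^{(k)})^{⊗2l} with all u^{(k)} regular vectors, and its other row tensors satisfy A_i = Σ_{k=1}^r (u^{(k)}_i / u^{(k)}_0) (u^{(k)})^{⊗2l} for i = 1,…,n. Then A can be written as A = Σ_{k=1}^r α_k (v^{(k)})^{⊗m}, where each α_k > 0 and each v^{(k)} = (1, v^{(k)}_1, …, v^{(k)}_n) satisfies Σ_{i=1}^n (v^{(k)}_i)² = 1. -/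
/-!
Normalise each regular vector by its zeroth coordinate: with `v = u / u₀` one has `v₀ = 1` and
regularity becomes `∑ vᵢ² = 1`. The row equations say that the entry of `A` at `(i, j)` is
`∑ (uᵢ / u₀) u^{⊗2l}_j = ∑ u₀^{2l} vᵢ v^{⊗2l}_j`, so the coefficient is `α = u₀^{2l}`, which is
positive because the exponent is even and `u₀ ≠ 0`.
-/

open Finset Matrix

/-- Rank-one tensor `u^{⊗m}` with entries `u_{i₁}⋯u_{i_m}`. -/
def rankOne (n m : ℕ) (u : Fin (n+1) → ℝ) : (Fin m → Fin (n+1)) → ℝ :=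
  fun i => ∏ j, u (i j)

/-- A vector `x ∈ ℝ^{n+1}` is regular if `x₀ ≠ 0` and `x₀² = x₁² + ⋯ + x_n²`. -/
def IsRegularVec (n : ℕ) (x : Fin (n+1) → ℝ) : Prop :=
  x 0 ≠ 0 ∧ x 0 ^ 2 = ∑ i : Fin n, x i.succ ^ 2

/-- An order-`m`, dimension-`(n+1)` real tensor is symmetric if it is invariant
under permutations of its indices. -/
def IsSymmetricTensor (n m : ℕ) (A : (Fin m → Fin (n+1)) → ℝ) : Prop :=
  ∀ (σ : Equiv.Perm (Fin m)) (i : Fin m → Fin (n+1)), A (i ∘ σ) = A i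

/-- `A • x^{⊗m} = Σ_{i₁,…,i_m} a_{i₁…i_m} x_{i₁}⋯x_{i_m}`. -/
def tEval (n m : ℕ) (A : (Fin m → Fin (n+1)) → ℝ) (x : Fin (n+1) → ℝ) : ℝ :=
  ∑ i : Fin m → Fin (n+1), A i * ∏ j, x (i j)

/-- Inner product of two tensors: `A • B = Σ_{i₁,…,i_m} a_{i₁…i_m} b_{i₁…i_m}`. -/
def tDot (n m : ℕ) (A B : (Fin m → Fin (n+1)) → ℝ) : ℝ :=
  ∑ i : Fin m → Fin (n+1), A i * B i

/-- A tensor is completely decomposable if `A = Σ_{k=1}^r (u^{(k)})^{⊗m}`. -/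
def CompletelyDecomposable (n m : ℕ) (A : (Fin m → Fin (n+1)) → ℝ) : Prop :=
  ∃ (r : ℕ) (u : Fin r → Fin (n+1) → ℝ), A = ∑ k, rankOne n m (u k)

/-- An even-order tensor is regularly decomposable if `A = Σ_{k=1}^r (u^{(k)})^{⊗m}`
with all `u^{(k)}` regular vectors. -/
def RegDecompEven (n m : ℕ) (A : (Fin m → Fin (n+1)) → ℝ) : Prop :=
  ∃ (r : ℕ) (u : Fin r → Fin (n+1) → ℝ),
    (∀ k, IsRegularVec n (u k)) ∧ A = ∑ k, rankOne n m (u k)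

/-- An odd-order (`m = 2l+1`) tensor is regularly decomposable if its 0-th row tensor
`A₀ = Σ_k (u^{(k)})^{⊗2l}` with all `u^{(k)}` regular, and its other row tensors are
`A_i = Σ_k (u^{(k)}_i / u^{(k)}_0) (u^{(k)})^{⊗2l}`. -/
def RegDecompOdd (n l : ℕ) (A : (Fin (2*l+1) → Fin (n+1)) → ℝ) : Prop :=
  ∃ (r : ℕ) (u : Fin r → Fin (n+1) → ℝ),
    (∀ k, IsRegularVec n (u k)) ∧
    (∀ j : Fin (2*l) → Fin (n+1), A (Fin.cons 0 j) = ∑ k, rankOne n (2*l) (u k) j) ∧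
    (∀ (i : Fin n) (j : Fin (2*l) → Fin (n+1)),
      A (Fin.cons i.succ j) = ∑ k, (u k i.succ / u k 0) * rankOne n (2*l) (u k) j)

/-- The transformed tensor `𝓡^m A`, with entries
`b_{l₁…l_m} = Σ_{i₁,…,i_m} a_{i₁…i_m} r_{l₁i₁}⋯r_{l_m i_m}`. -/
def tTransform (n m : ℕ) (M : Matrix (Fin (n+1)) (Fin (n+1)) ℝ)
    (A : (Fin m → Fin (n+1)) → ℝ) : (Fin m → Fin (n+1)) → ℝ :=
  fun l => ∑ i : Fin m → Fin (n+1), A i * ∏ j, M (l j) (i j)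

/-- A normalized orthogonal matrix: an `(n+1)×(n+1)` orthogonal matrix of block form
`[[1, 0ᵀ],[0, R]]` with `R` an `n×n` orthogonal matrix. -/
def IsNormalizedOrthogonal (n : ℕ) (M : Matrix (Fin (n+1)) (Fin (n+1)) ℝ) : Prop :=
  M 0 0 = 1 ∧ (∀ i : Fin n, M 0 i.succ = 0 ∧ M i.succ 0 = 0) ∧
  ∃ R : Matrix (Fin n) (Fin n) ℝ, Rᵀ * R = 1 ∧ ∀ i j : Fin n, M i.succ j.succ = R i j

/-- an odd-order (`m = 2l+1`) regularly decomposable tensor can be written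
as `A = Σ_{k=1}^r α_k (v^{(k)})^{⊗m}` with `α_k > 0`, `v^{(k)}_0 = 1` and
`Σ_{i=1}^n (v^{(k)}_i)² = 1`. -/
theorem statement_1 (n l r : ℕ) (A : (Fin (2*l+1) → Fin (n+1)) → ℝ)
    (hsym : IsSymmetricTensor n (2*l+1) A)
    (u : Fin r → Fin (n+1) → ℝ)
    (hreg : ∀ k, IsRegularVec n (u k))
    (hrow0 : ∀ j : Fin (2*l) → Fin (n+1),
      A (Fin.cons 0 j) = ∑ k, rankOne n (2*l) (u k) j)
    (hrow : ∀ (i : Fin n) (j : Fin (2*l) → Fin (n+1)),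
      A (Fin.cons i.succ j) = ∑ k, (u k i.succ / u k 0) * rankOne n (2*l) (u k) j) :
    ∃ (α : Fin r → ℝ) (v : Fin r → Fin (n+1) → ℝ),
      (∀ k, 0 < α k) ∧ (∀ k, v k 0 = 1) ∧
      (∀ k, ∑ i : Fin n, v k i.succ ^ 2 = 1) ∧
      A = ∑ k, α k • rankOne n (2*l+1) (v k) := by
  refine ⟨fun k => u k 0 ^ (2 * l), fun k i => u k i / u k 0, fun k => ?_, fun k => ?_,
    fun k => ?_, ?_⟩
  · exact (even_two_mul l).pow_pos (hreg k).1
  · exact div_self (hreg k).1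
  · simp only [div_pow]
    rw [← Finset.sum_div, ← (hreg k).2]
    exact div_self (pow_ne_zero 2 (hreg k).1)
  · -- The two families of row equations agree in form, since `u₀ / u₀ = 1`.
    have hrows : ∀ (i : Fin (n+1)) (j : Fin (2*l) → Fin (n+1)),
        A (Fin.cons i j) = ∑ k, (u k i / u k 0) * rankOne n (2*l) (u k) j := by
      intro i j
      refine Fin.cases ?_ (fun i => hrow i j) i
      rw [hrow0]
      exact Finset.sum_congr rfl fun k _ => by rw [div_self (hreg k).1, one_mul]
    funext i
    rw [← Fin.cons_self_tail i, hrows, Finset.sum_apply]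
    refine Finset.sum_congr rfl fun k _ => ?_
    have h0 : u k 0 ^ (2 * l) ≠ 0 := pow_ne_zero _ (hreg k).1
    simp only [Pi.smul_apply, smul_eq_mul, rankOne, Fin.prod_univ_succ (n := 2 * l),
      Fin.cons_zero, Fin.cons_succ, Finset.prod_div_distrib, Finset.prod_const,
      Finset.card_univ, Fintype.card_fin]
    rw [mul_left_comm, mul_div_cancel₀ _ h0]
end

section
/- Let m be even, let 𝓡 be an (n+1)×(n+1) normalized orthogonal matrix (block form [[1, 0ᵀ],[0, R]] with R orthogonal), let A be an order-m, dimension-(n+1) real symmetric tensor, and let B = 𝓡^m A. Then A is regularly decomposable if and only if B is regularly decomposable. -/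
/-!
The transform acts on rank-one tensors by `𝓡^m (u^{⊗m}) = (𝓡 u)^{⊗m}` and is additive
(`tTransform_sum_rankOne`). A normalized orthogonal matrix fixes the `0`-th coordinate and preserves
the Euclidean norm, hence preserves regular vectors (`IsRegularVec.mulVec`); so `𝓡^m` maps
regular decompositions to regular decompositions. The converse is the same argument for `𝓡ᵀ`,
which is again normalized orthogonal and whose transform inverts that of `𝓡`
(`tTransform_transpose_tTransform`).
-/

open Finset Matrix

lemma tTransform_sum_rankOne (n m r : ℕ) (M : Matrix (Fin (n+1)) (Fin (n+1)) ℝ)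
    (u : Fin r → Fin (n+1) → ℝ) :
    tTransform n m M (∑ k, rankOne n m (u k)) = ∑ k, rankOne n m (M *ᵥ u k) := by
  funext l
  simp only [tTransform, rankOne, Finset.sum_apply, Finset.sum_mul, Matrix.mulVec, dotProduct]
  rw [Finset.sum_comm]
  refine Finset.sum_congr rfl fun k _ => ?_
  rw [Fintype.prod_sum]
  refine Finset.sum_congr rfl fun i _ => ?_
  rw [← Finset.prod_mul_distrib]
  exact Finset.prod_congr rfl fun j _ => mul_comm _ _

lemma tTransform_transpose_tTransform (n m : ℕ) (M : Matrix (Fin (n+1)) (Fin (n+1)) ℝ)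
    (hM : Mᵀ * M = 1) (A : (Fin m → Fin (n+1)) → ℝ) :
    tTransform n m Mᵀ (tTransform n m M A) = A := by
  funext p
  -- The coefficient of `A i` is the product over the slots of the entries of `Mᵀ * M = 1`.
  have key : ∀ i : Fin m → Fin (n+1),
      ∑ l : Fin m → Fin (n+1), (∏ j, M (l j) (i j)) * ∏ j, Mᵀ (p j) (l j)
        = if p = i then 1 else 0 := by
    intro i
    have h1 : ∀ j, ∑ a, M a (i j) * Mᵀ (p j) a = if p j = i j then (1 : ℝ) else 0 := by
      intro j
      rw [← Matrix.one_apply, ← hM, Matrix.mul_apply]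
      exact Finset.sum_congr rfl fun a _ => mul_comm _ _
    simp_rw [← Finset.prod_mul_distrib]
    rw [← Fintype.prod_sum fun j a => M a (i j) * Mᵀ (p j) a]
    simp_rw [h1]
    rw [Finset.prod_ite_zero]
    simp [funext_iff]
  simp only [tTransform, Finset.sum_mul]
  rw [Finset.sum_comm]
  simp_rw [mul_assoc, ← Finset.mul_sum, key]
  simp

/-- An orthogonal matrix with first row `(1, 0, …, 0)` preserves regularity, since it preserves
both `x₀` and `∑ xᵢ²`. -/
lemma IsRegularVec.mulVec {n : ℕ} {x : Fin (n+1) → ℝ} (hx : IsRegularVec n x)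
    (M : Matrix (Fin (n+1)) (Fin (n+1)) ℝ) (hM : Mᵀ * M = 1) (h00 : M 0 0 = 1)
    (h0 : ∀ i : Fin n, M 0 i.succ = 0) : IsRegularVec n (M *ᵥ x) := by
  have e0 : (M *ᵥ x) 0 = x 0 := by
    simp [Matrix.mulVec, dotProduct, Fin.sum_univ_succ, h00, h0]
  have e : (M *ᵥ x) ⬝ᵥ (M *ᵥ x) = x ⬝ᵥ x := by
    rw [Matrix.dotProduct_mulVec, Matrix.vecMul_mulVec, ← Matrix.dotProduct_mulVec, hM,
      Matrix.one_mulVec]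
  simp only [dotProduct, Fin.sum_univ_succ, e0, ← pow_two] at e
  refine ⟨e0 ▸ hx.1, ?_⟩
  rw [e0, hx.2]
  linarith

lemma RegDecompEven.transform {n m : ℕ} {A : (Fin m → Fin (n+1)) → ℝ}
    (hA : RegDecompEven n m A) (M : Matrix (Fin (n+1)) (Fin (n+1)) ℝ) (hM : Mᵀ * M = 1)
    (h00 : M 0 0 = 1) (h0 : ∀ i : Fin n, M 0 i.succ = 0) :
    RegDecompEven n m (tTransform n m M A) := by
  obtain ⟨r, u, hu, rfl⟩ := hA
  exact ⟨r, fun k => M *ᵥ u k, fun k => (hu k).mulVec M hM h00 h0,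
    tTransform_sum_rankOne n m r M u⟩

/-- for even `m`, a normalized orthogonal matrix `𝓡`, a symmetric tensor
`A` and `B = 𝓡^m A`: `A` is regularly decomposable iff `B` is regularly decomposable. -/
theorem statement_10 (n m : ℕ) (hm : Even m)
    (M : Matrix (Fin (n+1)) (Fin (n+1)) ℝ)
    (hM : Mᵀ * M = 1) (hMn : IsNormalizedOrthogonal n M)
    (A : (Fin m → Fin (n+1)) → ℝ) (hsym : IsSymmetricTensor n m A)
    (B : (Fin m → Fin (n+1)) → ℝ) (hB : B = tTransform n m M A) :
    RegDecompEven n m A ↔ RegDecompEven n m B := by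
  obtain ⟨h00, h0, -⟩ := hMn
  subst hB
  refine ⟨fun h => h.transform M hM h00 fun i => (h0 i).1, fun h => ?_⟩
  have hM' : Mᵀᵀ * Mᵀ = 1 := by
    rw [Matrix.transpose_transpose]
    exact mul_eq_one_comm.mp hM
  have h' := h.transform Mᵀ hM' h00 fun i => (h0 i).2
  rwa [tTransform_transpose_tTransform n m M hM] at h'
end

section
/- Let m = 2l+1 be odd, let 𝓡 be an (n+1)×(n+1) normalized orthogonal matrix (block form [[1, 0ᵀ],[0, R]] with R orthogonal), let A be an order-m, dimension-(n+1) real symmetric tensor, and let B = 𝓡^m A. Then A is regularly decomposable if and only if B is regularly decomposable. -/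
/-!
A regular decomposition of an odd-order tensor says that, entrywise,
`A i = ∑ k, ∏ j, w k j (i j)`, where the first factor of the `k`-th summand is `u k / u k 0` and
all the others are `u k` (`regDecompOdd_iff`). A matrix `M` acts on such a product tensor factor by
factor (`tTransform_sum_prod`), replacing each `u k` by `M *ᵥ u k`. A normalized orthogonal `M`
fixes the zeroth coordinate and the Euclidean norm, so it preserves regular vectors and the
normalization by `u k 0`; hence it preserves regular decomposability. The converse is the same
fact for `Mᵀ`, which undoes the action of `M` (`tTransform_transpose_tTransform`).
-/

open Finset Matrix

/-- Regularity in terms of the full Euclidean norm: the spatial part has squared norm `x₀²`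
exactly when the whole vector has squared norm `2 x₀²`. -/
lemma isRegularVec_iff (n : ℕ) (x : Fin (n+1) → ℝ) :
    IsRegularVec n x ↔ x 0 ≠ 0 ∧ x ⬝ᵥ x = 2 * x 0 ^ 2 := by
  unfold IsRegularVec dotProduct
  rw [Fin.sum_univ_succ]
  simp only [← sq]
  constructor <;> rintro ⟨h, h'⟩ <;> exact ⟨h, by linarith⟩

/-- The factors of the product tensor contributed by `u` to an odd regular decomposition. -/
noncomputable def oddFactor (n l : ℕ) (u : Fin (n+1) → ℝ) : Fin (2*l+1) → Fin (n+1) → ℝ :=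
  Fin.cons (fun a => u a / u 0) (fun _ => u)

lemma regDecompOdd_iff (n l : ℕ) (A : (Fin (2*l+1) → Fin (n+1)) → ℝ) :
    RegDecompOdd n l A ↔ ∃ (r : ℕ) (u : Fin r → Fin (n+1) → ℝ),
      (∀ k, IsRegularVec n (u k)) ∧ ∀ i, A i = ∑ k, ∏ j, oddFactor n l (u k) j (i j) := by
  unfold RegDecompOdd
  refine exists_congr fun r => exists_congr fun u => and_congr_right fun hu => ?_
  have key : ∀ (a : Fin (n+1)) (j : Fin (2*l) → Fin (n+1)),
      ∑ k, ∏ t, oddFactor n l (u k) t ((Fin.cons a j : Fin (2*l+1) → Fin (n+1)) t)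
        = ∑ k, (u k a / u k 0) * rankOne n (2*l) (u k) j := by
    intro a j
    simp [Fin.prod_univ_succ, oddFactor, rankOne]
  have key0 : ∀ j : Fin (2*l) → Fin (n+1),
      ∑ k, (u k 0 / u k 0) * rankOne n (2*l) (u k) j = ∑ k, rankOne n (2*l) (u k) j := by
    intro j
    refine Finset.sum_congr rfl fun k _ => ?_
    rw [div_self (hu k).1, one_mul]
  constructor
  · rintro ⟨h0, h1⟩ i
    rw [← Fin.cons_self_tail i, key]
    generalize Fin.tail i = j
    refine Fin.cases ?_ (fun a => ?_) (i 0)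
    · rw [key0, h0]
    · rw [h1]
  · intro h
    exact ⟨fun j => by rw [h, key, key0], fun a j => by rw [h, key]⟩

lemma tTransform_sum_prod (n m r : ℕ) (M : Matrix (Fin (n+1)) (Fin (n+1)) ℝ)
    (w : Fin r → Fin m → Fin (n+1) → ℝ) (i : Fin m → Fin (n+1)) :
    tTransform n m M (fun p => ∑ k, ∏ j, w k j (p j)) i
      = ∑ k, ∏ j, (M *ᵥ w k j) (i j) := by
  simp only [tTransform, Finset.sum_mul]
  rw [Finset.sum_comm]
  refine Finset.sum_congr rfl fun k _ => ?_
  simp only [mulVec, dotProduct, Finset.prod_univ_sum, Fintype.piFinset_univ,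
    ← Finset.prod_mul_distrib, mul_comm]

/-- One direction, for an orthogonal matrix whose zeroth row is `e₀`: the vectors `u k` of a
decomposition are replaced by `M *ᵥ u k`. -/
lemma RegDecompOdd.tTransform {n l : ℕ} {M : Matrix (Fin (n+1)) (Fin (n+1)) ℝ}
    (hM : Mᵀ * M = 1) (h00 : M 0 0 = 1) (h0 : ∀ i : Fin n, M 0 i.succ = 0)
    {A : (Fin (2*l+1) → Fin (n+1)) → ℝ} (hA : RegDecompOdd n l A) :
    RegDecompOdd n l (tTransform n (2*l+1) M A) := by
  rw [regDecompOdd_iff] at hA ⊢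
  obtain ⟨r, u, hu, h⟩ := hA
  have hz : ∀ x : Fin (n+1) → ℝ, (M *ᵥ x) 0 = x 0 := by
    intro x
    simp [mulVec, dotProduct, Fin.sum_univ_succ, h00, h0]
  refine ⟨r, fun k => M *ᵥ u k, fun k => ?_, fun i => ?_⟩
  · have hk := (isRegularVec_iff n (u k)).1 (hu k)
    beta_reduce
    rw [isRegularVec_iff, hz, dotProduct_mulVec, ← mulVec_transpose, mulVec_mulVec, hM,
      one_mulVec]
    exact hk
  · rw [funext h, tTransform_sum_prod]
    refine Finset.sum_congr rfl fun k _ => Finset.prod_congr rfl fun j _ => ?_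
    refine Fin.cases ?_ (fun j => ?_) j
    · simp only [oddFactor, Fin.cons_zero, hz]
      simp only [mulVec, dotProduct, Finset.sum_div, mul_div_assoc]
    · simp only [oddFactor, Fin.cons_succ]

/-- for odd `m = 2l+1`, a normalized orthogonal matrix `𝓡`, a symmetric
tensor `A` and `B = 𝓡^m A`: `A` is regularly decomposable iff `B` is. -/
theorem statement_11 (n l : ℕ)
    (M : Matrix (Fin (n+1)) (Fin (n+1)) ℝ)
    (hM : Mᵀ * M = 1) (hMn : IsNormalizedOrthogonal n M)
    (A : (Fin (2*l+1) → Fin (n+1)) → ℝ) (hsym : IsSymmetricTensor n (2*l+1) A)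
    (B : (Fin (2*l+1) → Fin (n+1)) → ℝ) (hB : B = tTransform n (2*l+1) M A) :
    RegDecompOdd n l A ↔ RegDecompOdd n l B := by
  obtain ⟨h00, h0, -⟩ := hMn
  subst hB
  refine ⟨fun h => h.tTransform hM h00 fun i => (h0 i).1, fun h => ?_⟩
  have hM' : Mᵀᵀ * Mᵀ = 1 := by
    rw [transpose_transpose]
    exact mul_eq_one_comm.1 hM
  have h' := h.tTransform hM' h00 fun i => (h0 i).2
  rwa [tTransform_transpose_tTransform n _ M hM] at h'
end

section
/- Suppose A and B are order-m, dimension-(n+1) real symmetric tensors that are both completely decomposable. Then their Hadamard product A ∘ B, defined entrywise by (A ∘ B)_{i₁…i_m} = a_{i₁…i_m} b_{i₁…i_m}, is also completely decomposable. -/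
open Finset Matrix

/-- the Hadamard product of two completely decomposable symmetric
tensors is completely decomposable. -/
theorem statement_13 (n m : ℕ) (A B : (Fin m → Fin (n+1)) → ℝ)
    (hsymA : IsSymmetricTensor n m A) (hsymB : IsSymmetricTensor n m B)
    (hA : CompletelyDecomposable n m A) (hB : CompletelyDecomposable n m B) :
    CompletelyDecomposable n m (fun i => A i * B i) := by
  -- `(∑ u_k^{⊗m}) ∘ (∑ v_l^{⊗m}) = ∑_{k,l} (u_k ∘ v_l)^{⊗m}`, since `u^{⊗m} ∘ v^{⊗m} = (u ∘ v)^{⊗m}`;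
  -- the pairs `(k, l)` are enumerated by `Fin (r * s)`.
  obtain ⟨r, u, rfl⟩ := hA
  obtain ⟨s, v, rfl⟩ := hB
  refine ⟨r * s, fun k i => u (finProdFinEquiv.symm k).1 i * v (finProdFinEquiv.symm k).2 i, ?_⟩
  funext i
  rw [Finset.sum_apply, Finset.sum_apply, Finset.sum_apply, Finset.sum_mul_sum,
    ← Fintype.sum_prod_type', ← finProdFinEquiv.symm.sum_comp]
  simp only [rankOne, Finset.prod_mul_distrib]
end

section
/- Let m be even. The set RD_{m,n+1} of all regularly decomposable order-m, dimension-(n+1) real symmetric tensors is a closed subset of the space of order-m, dimension-(n+1) symmetric tensors: if A^{(1)}, A^{(2)}, … is a sequence of regularly decomposable tensors converging (entrywise) to a tensor A, then A is regularly decomposable. -/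
/-!
For `m = 0` a tensor is a single number, every rank-one tensor is `1`, and a convergent sequence of
natural numbers is eventually constant.

For even `m > 0`, a regular vector `u` satisfies `u^{⊗m} = u₀^m (u / u₀)^{⊗m}` with `u₀^m > 0`, so
the nonzero regularly decomposable tensors are exactly the positive multiples `t • c` of points `c` in the
convex hull of the compact set `normalizedRankOnes` of all `v^{⊗m}` with `v₀ = 1` and
`v₁² + ⋯ + v_n² = 1` (`RegDecompEven.eq_smul`, `regDecompEven_smul_of_mem_convexHull`).
All these `c` have `(0,…,0)` entry `1`, so `t` is the `(0,…,0)` entry of the tensor and converges along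
a convergent sequence. The hull is compact, so these hull points converge along a subsequence, and the limit is
again of the form `t • c`. Compactness of the hull is Carathéodory's theorem
(`isCompact_convexHull_of_isCompact`).
-/

open Finset Matrix

/-- The convex hull of a compact set in finite dimension is compact: by Carathéodory, it is the union
over `k ≤ dim + 1` of the sets of convex combinations of `k` points, each of which is a continuous
image of a product of compact sets. -/
lemma isCompact_convexHull_of_isCompact {E : Type*} [NormedAddCommGroup E] [NormedSpace ℝ E]
    [FiniteDimensional ℝ E] {s : Set E} (hs : IsCompact s) : IsCompact (convexHull ℝ s) := by
  have key : convexHull ℝ s = ⋃ k ∈ Finset.range (Module.finrank ℝ E + 2),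
      (fun p : (Fin k → ℝ) × (Fin k → E) => ∑ i, p.1 i • p.2 i) ''
        (stdSimplex ℝ (Fin k) ×ˢ Set.univ.pi fun _ => s) := by
    apply Set.Subset.antisymm
    · intro x hx
      obtain ⟨ι, _, z, w, hz, hind, hw, hw1, rfl⟩ := eq_pos_convex_span_of_mem_convexHull hx
      have hcard : Fintype.card ι ≤ Module.finrank ℝ E + 1 :=
        hind.card_le_finrank_succ.trans
          (Nat.succ_le_succ (Submodule.finrank_le _))
      let e := (Fintype.equivFin ι).symm
      simp only [Set.mem_iUnion, Finset.mem_range]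
      refine ⟨Fintype.card ι, by omega, (w ∘ e, z ∘ e), ⟨⟨fun i => (hw _).le, ?_⟩, ?_⟩, ?_⟩
      · exact (Equiv.sum_comp e w).trans hw1
      · exact fun i _ => hz ⟨e i, rfl⟩
      · exact Equiv.sum_comp e fun i => w i • z i
    · simp only [Set.iUnion_subset_iff]
      rintro k - _ ⟨⟨w, z⟩, ⟨⟨hw, hw1⟩, hz⟩, rfl⟩
      exact (convex_convexHull ℝ s).sum_mem (fun i _ => hw i) hw1
        fun i _ => subset_convexHull ℝ s (hz i trivial)
  rw [key]
  refine Finset.isCompact_biUnion _ fun k _ => ?_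
  exact ((isCompact_stdSimplex ℝ (Fin k)).prod (isCompact_univ_pi fun _ => hs)).image (by fun_prop)

/-- The tensors `v^{⊗m}` for `v` regular with `v₀ = 1`. -/
def normalizedRankOnes (n m : ℕ) : Set ((Fin m → Fin (n+1)) → ℝ) :=
  rankOne n m '' {v | v 0 = 1 ∧ ∑ i : Fin n, v i.succ ^ 2 = 1}

lemma isCompact_normalizedRankOnes (n m : ℕ) : IsCompact (normalizedRankOnes n m) := by
  apply IsCompact.image
  · apply IsCompact.of_isClosed_subset (isCompact_Icc (a := fun _ => (-1 : ℝ)) (b := fun _ => 1))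
    · apply IsClosed.and
      · exact isClosed_eq (by fun_prop) (by fun_prop)
      · exact isClosed_eq (by fun_prop) (by fun_prop)
    · rintro v ⟨h0, h1⟩
      have key : ∀ i, |v i| ≤ 1 := by
        intro i
        refine Fin.cases ?_ (fun j => ?_) i
        · simp [h0]
        · rw [← sq_le_one_iff_abs_le_one, ← h1]
          exact Finset.single_le_sum (f := fun i : Fin n => v i.succ ^ 2)
            (fun i _ => sq_nonneg _) (Finset.mem_univ j)
      exact ⟨fun i => (abs_le.1 (key i)).1, fun i => (abs_le.1 (key i)).2⟩
  · unfold rankOne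
    fun_prop

lemma rankOne_smul (n m : ℕ) (a : ℝ) (u : Fin (n+1) → ℝ) :
    rankOne n m (a • u) = a ^ m • rankOne n m u := by
  ext i
  simp [rankOne, Finset.prod_mul_distrib]

lemma regDecompEven_zero (n m : ℕ) : RegDecompEven n m 0 :=
  ⟨0, Fin.elim0, fun k => k.elim0, by simp⟩

lemma RegDecompEven.add {n m : ℕ} {A B : (Fin m → Fin (n+1)) → ℝ}
    (hA : RegDecompEven n m A) (hB : RegDecompEven n m B) : RegDecompEven n m (A + B) := by
  obtain ⟨r, u, hu, rfl⟩ := hA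
  obtain ⟨s, v, hv, rfl⟩ := hB
  refine ⟨r + s, Fin.append u v, fun k => ?_, ?_⟩
  · refine Fin.addCases (fun i => ?_) (fun i => ?_) k
    · simpa using hu i
    · simpa using hv i
  · simp [Fin.sum_univ_add]

lemma regDecompEven_smul_of_mem_convexHull {n m : ℕ} (hm : m ≠ 0) {c : (Fin m → Fin (n+1)) → ℝ}
    (hc : c ∈ convexHull ℝ (normalizedRankOnes n m)) {t : ℝ} (ht : 0 ≤ t) :
    RegDecompEven n m (t • c) := by
  suffices h : convexHull ℝ (normalizedRankOnes n m) ⊆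
      {c | ∀ t : ℝ, 0 ≤ t → RegDecompEven n m (t • c)} from h hc t ht
  apply convexHull_min
  · rintro _ ⟨v, ⟨h0, h1⟩, rfl⟩ t ht
    rcases ht.eq_or_lt with rfl | ht
    · simpa using regDecompEven_zero n m
    ·
      -- the weight `t` is absorbed by scaling `v` with the `m`-th root of `t`
      have hs : 0 < t ^ ((m : ℝ)⁻¹) := Real.rpow_pos_of_pos ht _
      refine ⟨1, fun _ => t ^ ((m : ℝ)⁻¹) • v, fun _ => ⟨?_, ?_⟩, ?_⟩
      · simpa [h0] using hs.ne'
      · simp [h0, mul_pow, ← Finset.mul_sum, h1]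
      · simp [rankOne_smul, Real.rpow_inv_natCast_pow ht.le hm]
  · intro x hx y hy a b ha hb _ t ht
    rw [smul_add, smul_smul, smul_smul]
    exact (hx _ (mul_nonneg ht ha)).add (hy _ (mul_nonneg ht hb))

/-- A nonzero regularly decomposable tensor is its `(0,…,0)` entry times a point of the hull: the
point is the average of the `(u / u₀)^{⊗m}` with weights proportional to `u₀^m`. -/
lemma RegDecompEven.eq_smul {n m : ℕ} (hm : Even m) {A : (Fin m → Fin (n+1)) → ℝ}
    (hA : RegDecompEven n m A) (hne : A ≠ 0) :
    0 < A (fun _ => 0) ∧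
      ∃ c ∈ convexHull ℝ (normalizedRankOnes n m), A = A (fun _ => 0) • c := by
  obtain ⟨r, u, hu, rfl⟩ := hA
  have hS : (∑ k, rankOne n m (u k)) (fun _ => 0) = ∑ k, u k 0 ^ m := by
    simp [rankOne]
  have hr : (Finset.univ : Finset (Fin r)).Nonempty := by
    by_contra h
    rw [Finset.not_nonempty_iff_eq_empty] at h
    exact hne (by rw [h]; simp)
  have hpos : 0 < ∑ k, u k 0 ^ m := Finset.sum_pos (fun k _ => hm.pow_pos (hu k).1) hr
  rw [hS]
  refine ⟨hpos, Finset.univ.centerMass (fun k => u k 0 ^ m)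
    (fun k => rankOne n m ((u k 0)⁻¹ • u k)), ?_, ?_⟩
  · refine Finset.centerMass_mem_convexHull _ (fun k _ => (hm.pow_pos (hu k).1).le) hpos ?_
    intro k _
    refine ⟨_, ⟨?_, ?_⟩, rfl⟩
    · simp [(hu k).1]
    · have h0 := (hu k).1
      simp only [Pi.smul_apply, smul_eq_mul, mul_pow, ← Finset.mul_sum, ← (hu k).2]
      field_simp
  · rw [Finset.centerMass, smul_smul, mul_inv_cancel₀ hpos.ne', one_smul]
    refine Finset.sum_congr rfl fun k _ => ?_
    rw [← rankOne_smul, smul_smul, mul_inv_cancel₀ (hu k).1, one_smul]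

/-- For `m = 0` the entries of a decomposable tensor are the natural number of its summands, so a
convergent sequence eventually equals its limit. -/
lemma regDecompEven_of_tendsto_order_zero (n : ℕ) (A : ℕ → (Fin 0 → Fin (n+1)) → ℝ)
    (hA : ∀ q, RegDecompEven n 0 (A q)) (L : (Fin 0 → Fin (n+1)) → ℝ)
    (hconv : ∀ i, Filter.Tendsto (fun q => A q i) Filter.atTop (nhds (L i))) :
    RegDecompEven n 0 L := by
  have hnat : ∀ q, ∃ r : ℕ, ∀ i, A q i = r := by
    intro q
    obtain ⟨r, u, _, h⟩ := hA q
    exact ⟨r, fun i => by simp [h, rankOne]⟩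
  choose r hr using hnat
  obtain ⟨N, hN⟩ := Metric.cauchySeq_iff'.1 (hconv Fin.elim0).cauchySeq 1 one_pos
  have hconst : ∀ q ≥ N, A q = A N := by
    intro q hq
    have h := hN q hq
    rw [hr, hr, Nat.dist_cast_real, Nat.dist_eq] at h
    have h' : r q = r N := by
      have h2 : |(r q : ℤ) - r N| < 1 := by exact_mod_cast h
      have h3 := Int.abs_lt_one_iff.1 h2
      omega
    funext i
    rw [hr, hr, h']
  have hL : L = A N := by
    funext i
    refine tendsto_nhds_unique (hconv i) (tendsto_const_nhds.congr' ?_)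
    filter_upwards [Filter.eventually_ge_atTop N] with q hq
    rw [hconst q hq]
  exact hL ▸ hA N

/-- for even `m`, the set of regularly decomposable tensors is closed:
an entrywise limit of regularly decomposable tensors is regularly decomposable. -/
theorem statement_17 (n m : ℕ) (hm : Even m)
    (A : ℕ → (Fin m → Fin (n+1)) → ℝ)
    (hA : ∀ q, RegDecompEven n m (A q))
    (L : (Fin m → Fin (n+1)) → ℝ)
    (hconv : ∀ i : Fin m → Fin (n+1),
      Filter.Tendsto (fun q => A q i) Filter.atTop (nhds (L i))) :
    RegDecompEven n m L := by
  rcases eq_or_ne m 0 with rfl | hm0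
  · exact regDecompEven_of_tendsto_order_zero n A hA L hconv
  have hAL : Filter.Tendsto A Filter.atTop (nhds L) := tendsto_pi_nhds.2 hconv
  by_cases hz : ∀ q, A q = 0
  · have hL : L = 0 := tendsto_nhds_unique hAL (by simp [funext hz])
    exact hL ▸ regDecompEven_zero n m
  push Not at hz
  obtain ⟨q₀, hq₀⟩ := hz
  -- the hull is nonempty, so zero tensors of the sequence are multiples of a hull point as well
  obtain ⟨-, c₀, hc₀, -⟩ := (hA q₀).eq_smul hm hq₀
  have hex : ∀ q, 0 ≤ A q (fun _ => 0) ∧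
      ∃ c ∈ convexHull ℝ (normalizedRankOnes n m), A q = A q (fun _ => 0) • c := by
    intro q
    by_cases h : A q = 0
    · exact ⟨by simp [h], c₀, hc₀, by simp [h]⟩
    · exact ⟨((hA q).eq_smul hm h).1.le, ((hA q).eq_smul hm h).2⟩
  choose ht c hc hAc using hex
  obtain ⟨d, hd, φ, hφ, hlim⟩ :=
    (isCompact_convexHull_of_isCompact (isCompact_normalizedRankOnes n m)).tendsto_subseq hc
  have hL : L = L (fun _ => 0) • d := by
    refine tendsto_nhds_unique (hAL.comp hφ.tendsto_atTop) ?_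
    refine (((hconv fun _ => 0).comp hφ.tendsto_atTop).smul hlim).congr fun q => ?_
    exact (hAc (φ q)).symm
  rw [hL]
  exact regDecompEven_smul_of_mem_convexHull hm0 hd (ge_of_tendsto' (hconv _) ht)
end
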